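/- Let λ = (λ_1,…,λ_r) be a composition of n, let t ∈ {0,1,…,r}, and set δ_t = n − 2 Σ_{j≤t} λ_j. If δ_t ≠ 0, then inserting the part |δ_t| after position t preserves the number of orbits: γ(T_{(λ_1,…,λ_t, |δ_t|, λ_{t+1},…,λ_r)}) = γ(T_λ). In particular, the (t+1)-th translation parameter of the composition (λ_1,…,λ_t, |δ_t|, λ_{t+1},…,λ_r) equals δ_t. -/

import Mathlib

/-!
Write `l = p ++ q`, where `p` consists of the first `t` parts, and put `a = p.sum`, `b = q.sum`,
`d = |δ_t| = |b - a|`, `l' = p ++ d :: q`. Let `M = (a, a + d]` be the inserted block and let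
`φ = gapMap a d` be the increasing bijection from `{1, …, a + b}` onto the complement of `M` in
`{1, …, a + b + d}`.

The exchange of a concatenation is computed from the exchanges of its two pieces
(`Texch_append_left`, `Texch_append_right`). This shows that `T_{l'}` sends `φ y` either directly to
`φ (T_l y)`, or first into `M` and then, after a translation by `δ_t = b - a`, to `φ (T_l y)`
(`Texch_gapMap`); so `T_l` is conjugate to the map induced by `T_{l'}` outside `M`. Moreover
`T_{l'}` sends `M` into the complement of `M`, so every orbit of `T_{l'}` leaves `M`. Hence
`S ↦ φ⁻¹(S)` is a bijection from the orbits of `T_{l'}` to those of `T_l`.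
-/

/-- A composition: a nonempty list of positive integers. -/
def IsComposition (l : List ℕ) : Prop := l ≠ [] ∧ ∀ x ∈ l, 0 < x

/-- The `i`-th translation parameter (0-indexed):
`s_i = (sum of parts after position i) - (sum of parts before position i)`. -/
def transParam (l : List ℕ) (i : ℕ) : ℤ :=
  ((l.drop (i + 1)).sum : ℤ) - ((l.take i).sum : ℤ)

/-- The symmetric discrete interval exchange associated to `l`, as a map `ℤ → ℤ`
(acting on `{1, …, n}`, identity elsewhere): `x ∈ B_i` is sent to `x + s_i`. -/
def Texch (l : List ℕ) (x : ℤ) : ℤ :=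
  x + ∑ i ∈ Finset.range l.length,
    (if ((l.take i).sum : ℤ) < x ∧ x ≤ ((l.take (i + 1)).sum : ℤ) then transParam l i else 0)

/-- The orbit of `x` under `T_l`. -/
def orbit (l : List ℕ) (x : ℤ) : Set ℤ := {y | ∃ k : ℕ, (Texch l)^[k] x = y}

/-- The set of orbits of `T_l` on `{1, …, n}`. -/
def orbitsSet (l : List ℕ) : Set (Set ℤ) :=
  {S | ∃ x : ℤ, 1 ≤ x ∧ x ≤ (l.sum : ℤ) ∧ S = orbit l x}

/-- The number of orbits `γ(T_l)` of `T_l` on `{1, …, n}`. -/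
noncomputable def numOrbits (l : List ℕ) : ℕ := (orbitsSet l).ncard

/-- `δ_t = n - 2·(λ_1 + … + λ_t)` for a composition of `n`, with `t ∈ {0,…,r}`. -/
def deltaParam (l : List ℕ) (t : ℕ) : ℤ := (l.sum : ℤ) - 2 * ((l.take t).sum : ℤ)

/-! ### The exchange of a concatenation -/

/-- Peeling off the first part `c`: the later blocks are those of `l` moved by `c`, and their
translation parameters drop by `c`. -/
lemma Texch_cons (c : ℕ) (l : List ℕ) (x : ℤ) :
    Texch (c :: l) x = x + (if 0 < x ∧ x ≤ c then (l.sum : ℤ) else 0) +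
      ∑ i ∈ Finset.range l.length,
        (if ((l.take i).sum : ℤ) < x - c ∧ x - c ≤ ((l.take (i + 1)).sum : ℤ)
          then transParam l i - c else 0) := by
  unfold Texch
  rw [List.length_cons, Finset.sum_range_succ', add_assoc, add_comm (Finset.sum _ _)]
  congr 2
  refine Finset.sum_congr rfl fun i _ => ?_
  simp only [List.take_succ_cons, List.sum_cons, transParam, List.drop_succ_cons]
  push_cast [-Nat.cast_list_sum]
  congr 1
  · apply propext
    constructor <;> rintro ⟨h1, h2⟩ <;> constructor <;> linarith
  · ring

lemma Texch_cons_left (c : ℕ) (l : List ℕ) (x : ℤ) (h0 : 0 < x) (h1 : x ≤ c) :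
    Texch (c :: l) x = x + l.sum := by
  rw [Texch_cons, if_pos ⟨h0, h1⟩, Finset.sum_eq_zero, add_zero]
  intro i _
  rw [if_neg]
  omega

/-- Exactly one block of `l` contains a given point of `{1, …, l.sum}`. -/
lemma sum_block_const (l : List ℕ) (c x : ℤ) (h0 : 0 < x) (h1 : x ≤ l.sum) :
    ∑ i ∈ Finset.range l.length,
      (if ((l.take i).sum : ℤ) < x ∧ x ≤ ((l.take (i + 1)).sum : ℤ) then c else 0) = c := by
  induction l generalizing x with
  | nil => simp at h1; omega
  | cons e l ih =>
    rw [List.length_cons, Finset.sum_range_succ']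
    simp only [List.take_succ_cons, List.sum_cons, List.take_zero, List.sum_nil] at h1 ⊢
    push_cast [-Nat.cast_list_sum] at h1 ⊢
    by_cases hx : x ≤ e
    · rw [Finset.sum_eq_zero, zero_add, if_pos (by simpa using ⟨h0, hx⟩)]
      intro i _
      rw [if_neg]
      omega
    · rw [if_neg (by simp; omega), add_zero]
      refine Eq.trans (Finset.sum_congr rfl fun i _ => ?_) (ih (x - e) (by omega) (by omega))
      congr 1
      apply propext
      constructor <;> rintro ⟨h1, h2⟩ <;> constructor <;> linarith

lemma Texch_cons_right (c : ℕ) (l : List ℕ) (x : ℤ) (h0 : c < x) (h1 : x ≤ c + l.sum) :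
    Texch (c :: l) x = Texch l (x - c) := by
  rw [Texch_cons, if_neg (by omega), Texch]
  have h := sum_block_const l c (x - c) (by omega) (by omega)
  have h2 : ∀ i ∈ Finset.range l.length,
      (if ((l.take i).sum : ℤ) < x - c ∧ x - c ≤ ((l.take (i + 1)).sum : ℤ)
          then transParam l i - c else 0) =
      (if ((l.take i).sum : ℤ) < x - c ∧ x - c ≤ ((l.take (i + 1)).sum : ℤ)
          then transParam l i else 0) -
      (if ((l.take i).sum : ℤ) < x - c ∧ x - c ≤ ((l.take (i + 1)).sum : ℤ)
          then (c : ℤ) else 0) := by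
    intro i _
    split_ifs <;> simp
  rw [Finset.sum_congr rfl h2, Finset.sum_sub_distrib, h]
  ring

lemma Texch_mem (l : List ℕ) (x : ℤ) (h0 : 0 < x) (h1 : x ≤ l.sum) :
    0 < Texch l x ∧ Texch l x ≤ l.sum := by
  induction l generalizing x with
  | nil => simp at h1; omega
  | cons c l ih =>
    simp only [List.sum_cons] at h1 ⊢
    push_cast [-Nat.cast_list_sum] at h1 ⊢
    by_cases hx : x ≤ c
    · rw [Texch_cons_left c l x h0 hx]; omega
    · rw [Texch_cons_right c l x (by omega) h1]
      have := ih (x - c) (by omega) (by omega)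
      omega

lemma Texch_inj (l : List ℕ) (x y : ℤ) (h0 : 0 < x) (h1 : x ≤ l.sum) (k0 : 0 < y)
    (k1 : y ≤ l.sum) (h : Texch l x = Texch l y) : x = y := by
  induction l generalizing x y with
  | nil => simp at h1; omega
  | cons c l ih =>
    simp only [List.sum_cons] at h1 k1
    push_cast [-Nat.cast_list_sum] at h1 k1
    by_cases hx : x ≤ c <;> by_cases hy : y ≤ c
    · rw [Texch_cons_left c l x h0 hx, Texch_cons_left c l y k0 hy] at h
      omega
    · rw [Texch_cons_left c l x h0 hx, Texch_cons_right c l y (by omega) k1] at h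
      have := Texch_mem l (y - c) (by omega) (by omega)
      omega
    · rw [Texch_cons_right c l x (by omega) h1, Texch_cons_left c l y k0 hy] at h
      have := Texch_mem l (x - c) (by omega) (by omega)
      omega
    · rw [Texch_cons_right c l x (by omega) h1, Texch_cons_right c l y (by omega) k1] at h
      have := ih (x - c) (y - c) (by omega) (by omega) (by omega) (by omega) h
      omega

lemma Texch_append_left (p q : List ℕ) (x : ℤ) (h0 : 0 < x) (h1 : x ≤ p.sum) :
    Texch (p ++ q) x = Texch p x + q.sum := by
  induction p generalizing x with
  | nil => simp at h1; omega
  | cons c p ih =>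
    simp only [List.sum_cons] at h1
    push_cast [-Nat.cast_list_sum] at h1
    rw [List.cons_append]
    by_cases hx : x ≤ c
    · rw [Texch_cons_left c _ x h0 hx, Texch_cons_left c _ x h0 hx, List.sum_append]
      push_cast [-Nat.cast_list_sum]
      ring
    · rw [Texch_cons_right c p x (by omega) h1, ← ih (x - c) (by omega) (by omega),
        Texch_cons_right c _ x (by omega)]
      rw [List.sum_append]
      push_cast [-Nat.cast_list_sum]
      omega

lemma Texch_append_right (p q : List ℕ) (x : ℤ) (h0 : p.sum < x) (h1 : x ≤ p.sum + q.sum) :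
    Texch (p ++ q) x = Texch q (x - p.sum) := by
  induction p generalizing x with
  | nil => simp
  | cons c p ih =>
    simp only [List.sum_cons] at h0 h1 ⊢
    push_cast [-Nat.cast_list_sum] at h0 h1 ⊢
    rw [List.cons_append, Texch_cons_right c _ x (by omega), ih (x - c) (by omega) (by omega)]
    · congr 1
      ring
    · rw [List.sum_append]
      push_cast [-Nat.cast_list_sum]
      omega

/-! ### Orbits -/

lemma orbit_subset (l : List ℕ) {x y : ℤ} (h : y ∈ orbit l x) : orbit l y ⊆ orbit l x := by
  obtain ⟨k, rfl⟩ := h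
  rintro _ ⟨j, rfl⟩
  exact ⟨j + k, Function.iterate_add_apply _ _ _ _⟩

/-- Points of `{1, …, n}` are periodic, because `T_l` permutes this finite set. -/
lemma mem_orbit_Texch (l : List ℕ) (x : ℤ) (h0 : 0 < x) (h1 : x ≤ l.sum) :
    x ∈ orbit l (Texch l x) := by
  have hmaps : Set.MapsTo (Texch l) (Set.Ioc 0 (l.sum : ℤ)) (Set.Ioc 0 (l.sum : ℤ)) :=
    fun z hz => Texch_mem l z hz.1 hz.2
  have hinj : Function.Injective hmaps.restrict := by
    rintro ⟨z, hz⟩ ⟨w, hw⟩ h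
    exact Subtype.ext (Texch_inj l z w hz.1 hz.2 hw.1 hw.2 (congrArg Subtype.val h))
  obtain ⟨k, hk, hp⟩ := hinj.mem_periodicPts (⟨x, h0, h1⟩ : Set.Ioc 0 (l.sum : ℤ))
  obtain ⟨j, rfl⟩ := Nat.exists_eq_succ_of_ne_zero hk.ne'
  refine ⟨j, ?_⟩
  have h := congrArg Subtype.val hp.eq
  rw [hmaps.iterate_restrict, Set.MapsTo.val_restrict_apply] at h
  rw [← Function.iterate_succ_apply]
  exact h

lemma orbit_Texch (l : List ℕ) (x : ℤ) (h0 : 0 < x) (h1 : x ≤ l.sum) :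
    orbit l (Texch l x) = orbit l x :=
  (orbit_subset l ⟨1, rfl⟩).antisymm (orbit_subset l (mem_orbit_Texch l x h0 h1))

/-! ### Inserting the new block -/

/-- The increasing map that opens a gap of length `d` right after position `a`. -/
def gapMap (a d y : ℤ) : ℤ := if y ≤ a then y else y + d

/-- Outside the inserted block, `T_{l'}` induces `T_l`, with return time at most two. -/
lemma Texch_gapMap (p q : List ℕ) (d : ℕ) (hd : d = ((q.sum : ℤ) - p.sum).natAbs)
    (y : ℤ) (h0 : 0 < y) (h1 : y ≤ (p ++ q).sum) :
    Texch (p ++ d :: q) (gapMap p.sum d y) = gapMap p.sum d (Texch (p ++ q) y) ∨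
    (((p.sum : ℤ) < Texch (p ++ d :: q) (gapMap p.sum d y) ∧
        Texch (p ++ d :: q) (gapMap p.sum d y) ≤ p.sum + d) ∧
      Texch (p ++ d :: q) (Texch (p ++ d :: q) (gapMap p.sum d y)) =
        gapMap p.sum d (Texch (p ++ q) y)) := by
  have hs : (d :: q).sum = d + q.sum := List.sum_cons
  -- `T_{l'}` translates the inserted block by `b - a`
  have hM : ∀ m : ℤ, p.sum < m → m ≤ p.sum + d →
      Texch (p ++ d :: q) m = m - p.sum + q.sum := by
    intro m hm1 hm2
    rw [Texch_append_right p _ m hm1 (by omega), Texch_cons_left d q _ (by omega) (by omega)]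
  rw [List.sum_append] at h1
  push_cast [-Nat.cast_list_sum] at h1
  by_cases hy : y ≤ p.sum
  · have e1 := Texch_append_left p q y h0 hy
    have e2 := Texch_append_left p (d :: q) y h0 hy
    have hP := Texch_mem p y h0 hy
    have e3 : gapMap p.sum d y = y := if_pos hy
    rw [e3, e2, e1, hs]
    push_cast [-Nat.cast_list_sum]
    by_cases hT : Texch p y + q.sum ≤ p.sum
    · right
      rw [hM _ (by omega) (by omega), gapMap, if_pos hT]
      omega
    · left
      rw [gapMap, if_neg hT]
      ring
  · have e1 := Texch_append_right p q y (by omega) h1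
    have e3 : gapMap p.sum d y = y + d := if_neg hy
    have e2 := Texch_append_right p (d :: q) (y + d) (by omega) (by omega)
    rw [Texch_cons_right d q _ (by omega) (by omega),
      show y + d - p.sum - d = y - (p.sum : ℤ) by ring] at e2
    have hQ := Texch_mem q (y - p.sum) (by omega) (by omega)
    rw [e3, e2, e1]
    by_cases hT : Texch q (y - p.sum) ≤ p.sum
    · left
      rw [gapMap, if_pos hT]
    · right
      rw [hM _ (by omega) (by omega), gapMap, if_neg hT]
      omega

lemma gapMap_mem_orbit_iff (p q : List ℕ) (d : ℕ) (hd : d = ((q.sum : ℤ) - p.sum).natAbs)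
    (y z : ℤ) (h0 : 0 < y) (h1 : y ≤ (p ++ q).sum) :
    gapMap p.sum d z ∈ orbit (p ++ d :: q) (gapMap p.sum d y) ↔ z ∈ orbit (p ++ q) y := by
  constructor
  · rintro ⟨k, hk⟩
    induction k using Nat.strong_induction_on generalizing y with
    | _ k ih =>
      have hm := Texch_mem (p ++ q) y h0 h1
      have hsub := orbit_subset (p ++ q) (x := y) ⟨1, rfl⟩
      match k with
      | 0 =>
        refine ⟨0, ?_⟩
        simp only [Function.iterate_zero, id, gapMap] at hk ⊢
        split_ifs at hk <;> omega
      | k + 1 =>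
        rw [Function.iterate_succ_apply] at hk
        rcases Texch_gapMap p q d hd y h0 h1 with h | ⟨h, hret⟩
        · rw [h] at hk
          exact hsub (ih k (by omega) _ hm.1 hm.2 hk)
        · match k with
          | 0 =>
            -- a point of the inserted block is not in the image of `gapMap`
            simp only [Function.iterate_zero, id] at hk
            rw [hk] at h
            unfold gapMap at h
            split_ifs at h <;> omega
          | k + 1 =>
            rw [Function.iterate_succ_apply, hret] at hk
            exact hsub (ih k (by omega) _ hm.1 hm.2 hk)
  · rintro ⟨k, rfl⟩
    induction k generalizing y with
    | zero => exact ⟨0, rfl⟩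
    | succ k ih =>
      have hm := Texch_mem (p ++ q) y h0 h1
      rw [Function.iterate_succ_apply]
      refine orbit_subset _ ?_ (ih _ hm.1 hm.2)
      rcases Texch_gapMap p q d hd y h0 h1 with h | ⟨h, hret⟩
      · exact ⟨1, h⟩
      · exact ⟨2, hret⟩

/-- Every orbit of `T_{l'}` is the orbit of a point outside the inserted block. -/
lemma exists_orbit_gapMap (p q : List ℕ) (d : ℕ) (hd : d = ((q.sum : ℤ) - p.sum).natAbs)
    (x : ℤ) (h0 : 0 < x) (h1 : x ≤ (p ++ d :: q).sum) :
    ∃ y : ℤ, 0 < y ∧ y ≤ (p ++ q).sum ∧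
      orbit (p ++ d :: q) x = orbit (p ++ d :: q) (gapMap p.sum d y) := by
  have hs' : (p ++ d :: q).sum = p.sum + (d + q.sum) := by simp
  have hs : (p ++ q).sum = p.sum + q.sum := by simp
  -- points outside the inserted block are in the image of `gapMap`
  have key : ∀ w : ℤ, 0 < w → w ≤ (p ++ d :: q).sum → (w ≤ p.sum ∨ p.sum + d < w) →
      ∃ y : ℤ, 0 < y ∧ y ≤ (p ++ q).sum ∧ gapMap p.sum d y = w := by
    rintro w hw0 hw1 (hw | hw)
    · exact ⟨w, hw0, by omega, if_pos hw⟩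
    · exact ⟨w - d, by omega, by omega, by rw [gapMap, if_neg (by omega)]; ring⟩
  by_cases hx : x ≤ p.sum ∨ p.sum + d < x
  · obtain ⟨y, hy0, hy1, rfl⟩ := key x h0 h1 hx
    exact ⟨y, hy0, hy1, rfl⟩
  · have hT : Texch (p ++ d :: q) x = x - p.sum + q.sum := by
      rw [Texch_append_right p _ x (by omega) (by rw [List.sum_cons]; omega),
        Texch_cons_left d q _ (by omega) (by omega)]
    obtain ⟨y, hy0, hy1, hy⟩ := key (Texch (p ++ d :: q) x) (by omega) (by omega) (by omega)
    exact ⟨y, hy0, hy1, by rw [hy, orbit_Texch _ x h0 h1]⟩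

lemma gapMap_preimage_orbit (p q : List ℕ) (d : ℕ) (hd : d = ((q.sum : ℤ) - p.sum).natAbs)
    (y : ℤ) (h0 : 0 < y) (h1 : y ≤ (p ++ q).sum) :
    gapMap p.sum d ⁻¹' orbit (p ++ d :: q) (gapMap p.sum d y) = orbit (p ++ q) y :=
  Set.ext fun z => gapMap_mem_orbit_iff p q d hd y z h0 h1

lemma numOrbits_append_insert (p q : List ℕ) (d : ℕ)
    (hd : d = ((q.sum : ℤ) - p.sum).natAbs) :
    numOrbits (p ++ d :: q) = numOrbits (p ++ q) := by
  have himg : orbitsSet (p ++ q) =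
      (fun S => gapMap p.sum d ⁻¹' S) '' orbitsSet (p ++ d :: q) := by
    ext S
    constructor
    · rintro ⟨y, h0, h1, rfl⟩
      refine ⟨_, ⟨gapMap p.sum d y, ?_, ?_, rfl⟩, gapMap_preimage_orbit p q d hd y h0 h1⟩
      · unfold gapMap; split_ifs <;> omega
      · simp only [List.sum_append, List.sum_cons, gapMap] at h1 ⊢
        push_cast [-Nat.cast_list_sum] at h1 ⊢
        split_ifs <;> omega
    · rintro ⟨_, ⟨x, h0, h1, rfl⟩, rfl⟩
      obtain ⟨y, hy0, hy1, hy⟩ := exists_orbit_gapMap p q d hd x h0 h1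
      exact ⟨y, hy0, hy1, by simp only [hy, gapMap_preimage_orbit p q d hd y hy0 hy1]⟩
  unfold numOrbits
  rw [himg, Set.InjOn.ncard_image]
  rintro _ ⟨x, h0, h1, rfl⟩ _ ⟨x', h0', h1', rfl⟩ h
  obtain ⟨y, hy0, hy1, hy⟩ := exists_orbit_gapMap p q d hd x h0 h1
  obtain ⟨z, hz0, hz1, hz⟩ := exists_orbit_gapMap p q d hd x' h0' h1'
  simp only [hy, hz] at h ⊢
  -- each of the two base points lies in the orbit of the other
  have h2 : y ∈ gapMap p.sum d ⁻¹' orbit (p ++ d :: q) (gapMap p.sum d z) := by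
    rw [← h]; exact ⟨0, rfl⟩
  have h3 : z ∈ gapMap p.sum d ⁻¹' orbit (p ++ d :: q) (gapMap p.sum d y) := by
    rw [h]; exact ⟨0, rfl⟩
  exact (orbit_subset _ h2).antisymm (orbit_subset _ h3)

lemma insertIdx_eq_append (l : List ℕ) (t d : ℕ) (ht : t ≤ l.length) :
    l.insertIdx t d = l.take t ++ d :: l.drop t := by
  induction t generalizing l with
  | zero => simp
  | succ t ih =>
    cases l with
    | nil => simp at ht
    | cons c l => simpa using ih l (by simpa using ht)

/-- if `δ_t ≠ 0`, inserting the part `|δ_t|` after position `t`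
preserves the number of orbits; moreover the `(t+1)`-th translation parameter of the new
composition equals `δ_t`. -/
theorem numOrbits_insertIdx_deltaParam (l : List ℕ) (hl : IsComposition l)
    (t : ℕ) (ht : t ≤ l.length) (hδ : deltaParam l t ≠ 0) :
    numOrbits (l.insertIdx t (deltaParam l t).natAbs) = numOrbits l ∧
      transParam (l.insertIdx t (deltaParam l t).natAbs) t = deltaParam l t := by
  have hsum := congrArg List.sum (List.take_append_drop t l)
  rw [List.sum_append] at hsum
  have hδ' : deltaParam l t = ((l.drop t).sum : ℤ) - (l.take t).sum := by
    unfold deltaParam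
    omega
  rw [insertIdx_eq_append l t _ ht]
  constructor
  · rw [numOrbits_append_insert _ _ _ (by rw [hδ']), List.take_append_drop]
  · have hlen : (l.take t).length = t := by simpa using ht
    rw [hδ', transParam, List.take_left' hlen, List.drop_append, hlen,
      List.drop_eq_nil_of_le (by omega)]
    simp
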